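/- arXiv:1705.02658 — 2 statements merged into one kernel-verified Lean document; each statement's English description precedes it below -/
import Mathlib

section
/- Let S be a numerical semigroup of genus g with conductor c, and let K = K(S). Then the weights are related by W_K = W_S + 2g − c (an equality of integers; one has c ≤ 2g, so the right-hand side is W_S plus the nonnegative integer 2g−c). -/
/-- A numerical semigroup: `0 ∈ S`, closed under addition, finite complement. -/
def IsNumericalSemigroup (S : Set ℕ) : Prop :=
  0 ∈ S ∧ (∀ a ∈ S, ∀ b ∈ S, a + b ∈ S) ∧ (Sᶜ : Set ℕ).Finite

/-- The genus: number of gaps. -/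
noncomputable def sgGenus (T : Set ℕ) : ℕ := (Tᶜ : Set ℕ).ncard

/-- The weight `W_T = Σ gaps − binomial(g+1,2)`, as an integer. -/
noncomputable def sgWeight (T : Set ℕ) : ℤ :=
  (∑ᶠ x ∈ (Tᶜ : Set ℕ), (x : ℤ)) - ((sgGenus T + 1).choose 2 : ℤ)

/-- The conductor: least `c` with `n ∈ S` for all `n ≥ c`. -/
noncomputable def sgConductor (S : Set ℕ) : ℕ :=
  sInf {c : ℕ | ∀ n : ℕ, c ≤ n → n ∈ S}

/-- `K(S) = {a ∈ ℕ | c − 1 − a ∉ S}`, the difference computed in `ℤ`,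
no negative integer belonging to `S`. -/
def Kset (S : Set ℕ) : Set ℕ :=
  {a : ℕ | ¬ ∃ s ∈ S, (s : ℤ) = (sgConductor S : ℤ) - 1 - (a : ℤ)}

/-- `S` is symmetric if for all `0 ≤ a ≤ c−1`, `a ∈ S ↔ c−1−a ∉ S`. -/
def IsSymmetricSgp (S : Set ℕ) : Prop :=
  ∀ a : ℕ, a < sgConductor S → (a ∈ S ↔ (sgConductor S - 1 - a) ∉ S)

/-!
The reflection `x ↦ c - 1 - x` of `{0, …, c - 1}` carries the gaps of `S` onto the elements of `K`
below `c`, that is, onto the complement in `{0, …, c - 1}` of the gaps of `K`. The function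
`2 x - (c - 1)` is odd under this reflection and its total over `{0, …, c - 1}` vanishes, so its
sums over the gaps of `S` and over the gaps of `K` agree; as there are `c - g` gaps of `K`, this
compares the two weights. Moreover `S ⊆ K`, because `c - 1` is not in `S` and so is not a sum of two
elements of `S`; hence `c - g ≤ g`.
-/

section Conductor

variable {S : Set ℕ}

theorem mem_of_sgConductor_le (hS : Sᶜ.Finite) {n : ℕ} (hn : sgConductor S ≤ n) : n ∈ S := by
  have hne : {c : ℕ | ∀ n : ℕ, c ≤ n → n ∈ S}.Nonempty := by
    obtain ⟨b, hb⟩ := hS.bddAbove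
    refine ⟨b + 1, fun n hbn => ?_⟩
    by_contra hn
    exact absurd (hb hn) (by omega)
  exact Nat.sInf_mem hne n hn

theorem compl_subset_Iio_sgConductor (hS : Sᶜ.Finite) : Sᶜ ⊆ Set.Iio (sgConductor S) :=
  fun _ hx => not_le.1 fun h => hx (mem_of_sgConductor_le hS h)

theorem notMem_of_add_one_eq_sgConductor {x : ℕ} (hx : x + 1 = sgConductor S) : x ∉ S := by
  intro hxS
  have hmem : ∀ n, sgConductor S ≤ n → n ∈ S :=
    Nat.sInf_mem (Nat.nonempty_of_pos_sInf (show 0 < sgConductor S by omega))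
  have hle : sgConductor S ≤ x := Nat.sInf_le fun n hn => by
    rcases hn.eq_or_lt with rfl | hlt
    · exact hxS
    · exact hmem n (by omega)
  omega

end Conductor

section Reflection

variable {S : Set ℕ}

theorem mem_Kset_iff {a : ℕ} : a ∈ Kset S ↔ ∀ s ∈ S, a + s + 1 ≠ sgConductor S := by
  simp only [Kset, Set.mem_ofPred_eq, not_exists, not_and]
  exact forall₂_congr fun s _ => by omega

theorem compl_Kset_subset_Iio_sgConductor : (Kset S)ᶜ ⊆ Set.Iio (sgConductor S) := by
  intro x hx
  simp only [Set.mem_compl_iff, mem_Kset_iff, not_forall, not_not] at hx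
  obtain ⟨s, -, hs⟩ := hx
  exact Set.mem_Iio.2 (by omega)

theorem finite_compl_Kset (S : Set ℕ) : (Kset S)ᶜ.Finite :=
  (Set.finite_Iio _).subset compl_Kset_subset_Iio_sgConductor

theorem subset_Kset (hadd : ∀ a ∈ S, ∀ b ∈ S, a + b ∈ S) : S ⊆ Kset S :=
  fun a ha => mem_Kset_iff.2 fun s hs h =>
    notMem_of_add_one_eq_sgConductor h (hadd a ha s hs)

theorem bijOn_reflect_compl (hS : Sᶜ.Finite) :
    Set.BijOn (sgConductor S - 1 - ·) Sᶜ (Set.Iio (sgConductor S) ∩ Kset S) := by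
  have hlt : ∀ x ∈ Sᶜ, x < sgConductor S := compl_subset_Iio_sgConductor hS
  have hinv : Set.InvOn (sgConductor S - 1 - ·) (sgConductor S - 1 - ·) Sᶜ
      (Set.Iio (sgConductor S) ∩ Kset S) :=
    ⟨fun x hx => Nat.sub_sub_self (Nat.le_sub_one_of_lt (hlt x hx)),
      fun y hy => Nat.sub_sub_self (Nat.le_sub_one_of_lt hy.1)⟩
  refine hinv.bijOn (fun x hx => ?_) fun y ⟨hyc, hyK⟩ hyS => ?_
  · have hxc := hlt x hx
    refine ⟨show sgConductor S - 1 - x < sgConductor S by omega,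
      mem_Kset_iff.2 fun s hs (h : sgConductor S - 1 - x + s + 1 = sgConductor S) => ?_⟩
    have hsx : s = x := by omega
    exact hx (hsx ▸ hs)
  · rw [Set.mem_Iio] at hyc
    have hsum : y + (sgConductor S - 1 - y) + 1 = sgConductor S := by omega
    exact mem_Kset_iff.1 hyK _ hyS hsum

theorem finsum_compl_add_finsum_compl_Kset {M : Type*} [AddCommMonoid M] (hS : Sᶜ.Finite)
    (f : ℕ → M) :
    ∑ᶠ x ∈ Sᶜ, f (sgConductor S - 1 - x) + ∑ᶠ x ∈ (Kset S)ᶜ, f x =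
      ∑ x ∈ Finset.range (sgConductor S), f x := by
  have hdiff : Set.Iio (sgConductor S) \ Kset S = (Kset S)ᶜ :=
    Set.inter_eq_right.2 compl_Kset_subset_Iio_sgConductor
  rw [finsum_mem_eq_of_bijOn _ (bijOn_reflect_compl hS) fun _ _ => rfl, ← hdiff,
    finsum_mem_inter_add_sdiff _ (Set.finite_Iio _), ← Finset.coe_range, finsum_mem_coe_finset]

end Reflection

section Genus

variable {S : Set ℕ}

theorem sgGenus_add_sgGenus_Kset (hS : Sᶜ.Finite) :
    sgGenus S + sgGenus (Kset S) = sgConductor S := by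
  have hcount := finsum_compl_add_finsum_compl_Kset hS fun _ => 1
  rwa [finsum_one, finsum_one, Finset.sum_const, Finset.card_range, smul_eq_mul, mul_one]
    at hcount

theorem sgConductor_le_two_mul_sgGenus (hS : Sᶜ.Finite) (hadd : ∀ a ∈ S, ∀ b ∈ S, a + b ∈ S) :
    sgConductor S ≤ 2 * sgGenus S := by
  have hle : sgGenus (Kset S) ≤ sgGenus S :=
    Set.ncard_le_ncard (Set.compl_subset_compl.2 (subset_Kset hadd)) hS
  have := sgGenus_add_sgGenus_Kset hS
  omega

end Genus

section Weight

theorem two_mul_sgWeight {T : Set ℕ} (hT : Tᶜ.Finite) (m : ℤ) :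
    2 * sgWeight T = ∑ᶠ x ∈ Tᶜ, (2 * (x : ℤ) - m) + sgGenus T * (m - 1 - sgGenus T) := by
  have hchoose : ((sgGenus T : ℤ) + 1) * sgGenus T = (sgGenus T + 1).choose 2 * 2 := by
    exact_mod_cast by simpa using Nat.add_one_mul_choose_eq (sgGenus T) 1
  have hconst : ∑ᶠ _x ∈ Tᶜ, m = sgGenus T * m := by
    rw [finsum_mem_eq_finite_toFinset_sum _ hT, Finset.sum_const, nsmul_eq_mul, sgGenus,
      Set.ncard_eq_toFinset_card _ hT]
  rw [finsum_mem_sub_distrib _ _ hT, hconst, ← mul_finsum_mem, sgWeight]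
  linear_combination hchoose

theorem sum_range_two_mul_sub (n : ℕ) :
    ∑ x ∈ Finset.range n, (2 * (x : ℤ) - (n - 1)) = 0 := by
  have hgauss : 2 * ∑ x ∈ Finset.range n, (x : ℤ) = n * (n - 1) := by
    induction n with
    | zero => simp
    | succ n ih =>
      rw [Finset.sum_range_succ, mul_add, ih]
      push_cast
      ring
  rw [Finset.sum_sub_distrib, ← Finset.mul_sum, hgauss, Finset.sum_const, Finset.card_range,
    nsmul_eq_mul, sub_self]

theorem finsum_compl_Kset_two_mul_sub {S : Set ℕ} (hS : Sᶜ.Finite) :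
    ∑ᶠ x ∈ (Kset S)ᶜ, (2 * (x : ℤ) - (sgConductor S - 1)) =
      ∑ᶠ x ∈ Sᶜ, (2 * (x : ℤ) - (sgConductor S - 1)) := by
  have hodd : ∑ᶠ x ∈ Sᶜ, (2 * ((sgConductor S - 1 - x : ℕ) : ℤ) - (sgConductor S - 1)) =
      -∑ᶠ x ∈ Sᶜ, (2 * (x : ℤ) - (sgConductor S - 1)) := by
    rw [← finsum_mem_neg_distrib _ hS]
    refine finsum_mem_congr rfl fun x hx => ?_
    have : x < sgConductor S := compl_subset_Iio_sgConductor hS hx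
    omega
  have htotal := finsum_compl_add_finsum_compl_Kset hS
    fun x => 2 * (x : ℤ) - (sgConductor S - 1)
  rw [hodd, sum_range_two_mul_sub] at htotal
  exact (neg_add_eq_zero.1 htotal).symm

theorem weight_Kset_eq_general {S : Set ℕ} (hS : Sᶜ.Finite) :
    sgWeight (Kset S) = sgWeight S + 2 * (sgGenus S : ℤ) - (sgConductor S : ℤ) := by
  have hWS := two_mul_sgWeight hS (sgConductor S - 1)
  have hWK := two_mul_sgWeight (finite_compl_Kset S) (sgConductor S - 1)
  have hgenus : (sgGenus S : ℤ) + sgGenus (Kset S) = sgConductor S := by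
    exact_mod_cast sgGenus_add_sgGenus_Kset hS
  rw [finsum_compl_Kset_two_mul_sub hS] at hWK
  refine mul_left_cancel₀ (two_ne_zero (α := ℤ)) ?_
  rw [mul_sub, mul_add, hWK, hWS, ← hgenus]
  ring

end Weight

/-- `W_K = W_S + 2g − c` (an equality of integers; moreover `c ≤ 2g`). -/
theorem weight_Kset_eq (S : Set ℕ) (hS : IsNumericalSemigroup S)
    (g : ℕ) (hg : sgGenus S = g) :
    sgWeight (Kset S) = sgWeight S + 2 * (g : ℤ) - (sgConductor S : ℤ) ∧
      sgConductor S ≤ 2 * g := by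
  subst hg
  exact ⟨weight_Kset_eq_general hS.2.2, sgConductor_le_two_mul_sgGenus hS.2.2 hS.2.1⟩
end

section
/- Let S be a numerical semigroup of genus g ≥ 11 with 2 ∉ S, and let K = K(S). Then W_K = (g² − 5g + 10)/2 if and only if S is bielliptic, i.e., if and only if 4 ∈ S, 6 ∈ S, and 1, 2, 3, 5 ∉ S. -/
/-!
Let `F` be the Frobenius number of `S`. Reflection at `F` turns the weight condition into the
statement that the gaps below `F` sum to `(g - 2) ^ 2 + 2 = 1 + 2 + 3 + 5 + 7 + ⋯ + (2 * g - 5)`,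
so it suffices to bound the gaps below `F` by the terms of the sequence `1, 2, 3, 5, 7, …`.

If `3 ∉ S` and a gap `l < F` exceeds its term, then at most half of the numbers below `l` are gaps,
so `S` looks pseudo-symmetric up to `l`. Such a pattern can only be continued by further gaps when
`l = 2 * m - 2` for the multiplicity `m`. Then there are at most `m` gaps below `F` and their sum is
too small. If `3 ∈ S`, then the gaps are given by their numbers in the two nonzero residue classes
modulo `3`, and their sum is again too small. So a large sum forces the gaps below `F` to be exactly
`1, 2, 3, 5, 7, …`, which contain neither `4` nor `6`, and a semigroup containing `4` and `5` has at
most six gaps.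
-/

section Naturals

open Finset

variable {M : Type*} [AddCommMonoid M]

theorem sum_filter_count (p : ℕ → Prop) [DecidablePred p] (f : ℕ → M) (n : ℕ) :
    ∑ x ∈ range n with p x, f (Nat.count p x) = ∑ j ∈ range (Nat.count p n), f j := by
  induction n with
  | zero => simp
  | succ n ih =>
    rw [sum_filter] at ih ⊢
    rw [sum_range_succ, ih, Nat.count_succ]
    split_ifs
    · rw [sum_range_succ]
    · rw [add_zero, add_zero]

theorem sum_filter_range_reflect (p : ℕ → Prop) [DecidablePred p] (f : ℕ → M) (n : ℕ) :
    ∑ x ∈ range n with p (n - 1 - x), f x = ∑ x ∈ range n with p x, f (n - 1 - x) := by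
  rw [sum_filter, sum_filter, ← sum_range_reflect]
  refine sum_congr rfl fun x hx => ?_
  rw [Nat.sub_sub_self (Nat.le_sub_one_of_lt (mem_range.mp hx))]

theorem two_mul_sum_range_mul_add {R : Type*} [CommRing R] (m r : R) (n : ℕ) :
    2 * ∑ i ∈ range n, (m * i + r) = m * (n * (n - 1)) + 2 * r * n := by
  induction n with
  | zero => simp
  | succ n ih =>
    rw [sum_range_succ, mul_add, ih]
    push_cast
    ring

theorem sum_range_two_mul_add_one (n : ℕ) : ∑ i ∈ range n, (2 * i + 1) = n ^ 2 := by
  induction n with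
  | zero => rfl
  | succ n ih =>
    rw [sum_range_succ, ih]
    ring

/-- The sequence `1, 2, 3, 5, 7, 9, …`, indexed from `0`, whose initial segments are the gaps
below the Frobenius number of a bielliptic semigroup. -/
def biellipticGap (j : ℕ) : ℕ := if j < 2 then j + 1 else 2 * j - 1

theorem sum_range_biellipticGap (k : ℕ) :
    ∑ j ∈ range (k + 2), biellipticGap j = (k + 1) ^ 2 + 2 := by
  induction k with
  | zero => rfl
  | succ k ih =>
    rw [sum_range_succ, ih, biellipticGap, if_neg (by omega),
      show 2 * (k + 2) - 1 = 2 * k + 3 by omega]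
    ring

theorem succ_le_biellipticGap (j : ℕ) : j + 1 ≤ biellipticGap j := by
  unfold biellipticGap
  split_ifs <;> omega

/-- The gaps of a numerical semigroup containing `3` with `x` gaps congruent to `1` and `y` gaps
congruent to `2` modulo `3`, that is, with Kunz coordinates `(x, y)`. -/
def gapsModThree (x y : ℕ) : Finset ℕ :=
  (range x).image (3 * · + 1) ∪ (range y).image (3 * · + 2)

theorem sum_gapsModThree (f : ℕ → M) (x y : ℕ) :
    ∑ n ∈ gapsModThree x y, f n =
      ∑ i ∈ range x, f (3 * i + 1) + ∑ i ∈ range y, f (3 * i + 2) := by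
  have hdisj : Disjoint ((range x).image (3 * · + 1)) ((range y).image (3 * · + 2)) := by
    simp only [disjoint_left, mem_image, not_exists, not_and]
    rintro _ ⟨i, -, rfl⟩ j -
    omega
  have hinj (r : ℕ) : Function.Injective (3 * · + r) := fun i j h => by
    simpa using h
  rw [gapsModThree, sum_union hdisj, sum_image (hinj 1).injOn, sum_image (hinj 2).injOn]

theorem card_gapsModThree (x y : ℕ) : #(gapsModThree x y) = x + y := by
  rw [card_eq_sum_ones, sum_gapsModThree]
  simp

theorem two_mul_sum_gapsModThree {R : Type*} [CommRing R] (x y : ℕ) :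
    2 * ∑ n ∈ gapsModThree x y, (n : R) =
      3 * (x * (x - 1)) + 2 * x + (3 * (y * (y - 1)) + 4 * y) := by
  rw [sum_gapsModThree, mul_add]
  push_cast
  rw [two_mul_sum_range_mul_add, two_mul_sum_range_mul_add]
  ring

theorem mem_gapsModThree {x y n : ℕ} :
    n ∈ gapsModThree x y ↔ (∃ i < x, 3 * i + 1 = n) ∨ ∃ i < y, 3 * i + 2 = n := by
  simp only [gapsModThree, mem_union, mem_image, mem_range]

end Naturals

section Gaps

open Finset

/-- The Frobenius number: the largest gap. It is meaningless when there are no gaps, where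
truncated subtraction makes it `0`. -/
noncomputable def sgFrobenius (S : Set ℕ) : ℕ := sgConductor S - 1

/-- The multiplicity: the least positive element. -/
noncomputable def sgMultiplicity (S : Set ℕ) : ℕ := sInf {x | 0 < x ∧ x ∈ S}

/-- `S` contains `4` and `6` but none of `1, 2, 3, 5`. -/
def IsBielliptic (S : Set ℕ) : Prop :=
  4 ∈ S ∧ 6 ∈ S ∧ 1 ∉ S ∧ 2 ∉ S ∧ 3 ∉ S ∧ 5 ∉ S

/-- Reflection in `l / 2` sends the gaps in `[0, l]` into `S`, except possibly the midpoint. For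
`l` the Frobenius number this says that `S` is symmetric or pseudo-symmetric. -/
def IsPseudoSymmetricUpTo (S : Set ℕ) (l : ℕ) : Prop :=
  ∀ x ≤ l, x ∉ S → l - x ∈ S ∨ 2 * x = l

open Classical in
/-- The gaps less than `n`. -/
noncomputable def sgGapsBelow (S : Set ℕ) (n : ℕ) : Finset ℕ := {x ∈ range n | x ∉ S}

/-- The finset of all gaps. -/
noncomputable def sgGaps (S : Set ℕ) : Finset ℕ := sgGapsBelow S (sgConductor S)

section Set

variable {S : Set ℕ} {n x : ℕ}

theorem mem_sgGapsBelow : x ∈ sgGapsBelow S n ↔ x < n ∧ x ∉ S := by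
  classical
  rw [sgGapsBelow, mem_filter, mem_range]

theorem sum_sgGapsBelow_succ {M : Type*} [AddCommMonoid M] (f : ℕ → M) (hn : n ∉ S) :
    ∑ x ∈ sgGapsBelow S (n + 1), f x = ∑ x ∈ sgGapsBelow S n, f x + f n := by
  classical
  rw [sgGapsBelow, sgGapsBelow, sum_filter, sum_range_succ, ← sum_filter, if_pos hn]

theorem card_sgGapsBelow_succ (hn : n ∉ S) :
    #(sgGapsBelow S (n + 1)) = #(sgGapsBelow S n) + 1 := by
  simpa only [card_eq_sum_ones] using sum_sgGapsBelow_succ (fun _ => 1) hn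

theorem sum_sgGapsBelow_card {M : Type*} [AddCommMonoid M] (f : ℕ → M) (S : Set ℕ) (n : ℕ) :
    ∑ x ∈ sgGapsBelow S n, f #(sgGapsBelow S x) = ∑ j ∈ range #(sgGapsBelow S n), f j := by
  classical
  simp only [sgGapsBelow, ← Nat.count_eq_card_filter_range]
  exact sum_filter_count (· ∉ S) f n

theorem notMem_of_lt_sgMultiplicity (h0 : 0 < x) (hx : x < sgMultiplicity S) : x ∉ S :=
  fun h => Nat.notMem_of_lt_sInf hx ⟨h0, h⟩

theorem sgMultiplicity_le (h0 : 0 < x) (hx : x ∈ S) : sgMultiplicity S ≤ x :=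
  Nat.sInf_le ⟨h0, hx⟩

theorem IsPseudoSymmetricUpTo.mem_of_sgMultiplicity_le
    (hsymm : IsPseudoSymmetricUpTo S (2 * sgMultiplicity S - 2)) (hmx : sgMultiplicity S ≤ x)
    (hx : x < 2 * sgMultiplicity S - 2) : x ∈ S := by
  have := (hsymm (2 * sgMultiplicity S - 2 - x) (Nat.sub_le _ _)
    (notMem_of_lt_sgMultiplicity (by omega) (by omega))).resolve_right (by omega)
  rwa [Nat.sub_sub_self hx.le] at this

theorem mem_Kset_of_sgConductor_le (hx : sgConductor S ≤ x) : x ∈ Kset S := by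
  rintro ⟨s, -, hs⟩
  omega

theorem mem_Kset_iff_of_lt (hx : x < sgConductor S) : x ∈ Kset S ↔ sgConductor S - 1 - x ∉ S := by
  refine not_congr ⟨?_, fun h => ⟨_, h, by omega⟩⟩
  rintro ⟨s, hs, h⟩
  rwa [show sgConductor S - 1 - x = s by omega]

theorem compl_Kset (S : Set ℕ) : (Kset S)ᶜ = ↑(sgGapsBelow (Kset S) (sgConductor S)) := by
  ext x
  rw [mem_coe, mem_sgGapsBelow, Set.mem_compl_iff, iff_and_self]
  exact fun hx => lt_of_not_ge fun h => hx (mem_Kset_of_sgConductor_le h)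

theorem sum_sgGapsBelow_Kset_add_sum_sgGaps {M : Type*} [AddCommMonoid M] (S : Set ℕ)
    (f : ℕ → M) :
    ∑ x ∈ sgGapsBelow (Kset S) (sgConductor S), f x +
      ∑ x ∈ sgGaps S, f (sgConductor S - 1 - x) = ∑ x ∈ range (sgConductor S), f x := by
  classical
  have hK : sgGapsBelow (Kset S) (sgConductor S) =
      {x ∈ range (sgConductor S) | ¬ sgConductor S - 1 - x ∉ S} := by
    ext x
    rw [mem_sgGapsBelow, mem_filter, mem_range]
    exact and_congr_right fun hx => (mem_Kset_iff_of_lt hx).not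
  rw [hK, sgGaps, sgGapsBelow, ← sum_filter_range_reflect (· ∉ S), add_comm]
  exact sum_filter_add_sum_filter_not _ _ _

theorem two_mul_sgWeight_Kset (S : Set ℕ) :
    2 * sgWeight (Kset S) = 2 * ∑ x ∈ sgGaps S, (x : ℤ) - 2 * sgConductor S +
      3 * #(sgGaps S) - (#(sgGaps S) : ℤ) ^ 2 := by
  have hcard : (#(sgGapsBelow (Kset S) (sgConductor S)) : ℤ) + #(sgGaps S) = sgConductor S := by
    simpa using sum_sgGapsBelow_Kset_add_sum_sgGaps S fun _ => (1 : ℤ)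
  have hsum := sum_sgGapsBelow_Kset_add_sum_sgGaps S fun x => (x : ℤ)
  have hreflect : ∑ x ∈ sgGaps S, ((sgConductor S - 1 - x : ℕ) : ℤ) =
      #(sgGaps S) * (sgConductor S - 1 : ℤ) - ∑ x ∈ sgGaps S, (x : ℤ) := by
    rw [← nsmul_eq_mul, ← sum_const, ← sum_sub_distrib]
    refine sum_congr rfl fun x hx => ?_
    have := (mem_sgGapsBelow.mp hx).1
    omega
  have hrange : 2 * ∑ x ∈ range (sgConductor S), (x : ℤ) = sgConductor S * (sgConductor S - 1) := by
    simpa using two_mul_sum_range_mul_add (1 : ℤ) 0 (sgConductor S)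
  have hchoose (n : ℕ) : 2 * ((n + 1).choose 2 : ℤ) = n * (n + 1) := by
    rw [Nat.choose_two_right, ← sum_range_id, Nat.cast_sum, mul_comm (n : ℤ)]
    simpa using two_mul_sum_range_mul_add (1 : ℤ) 0 (n + 1)
  rw [sgWeight, sgGenus, compl_Kset, finsum_mem_coe_finset, Set.ncard_coe_finset, mul_sub, hchoose]
  rw [hreflect] at hsum
  rw [← hcard] at hsum hrange ⊢
  linear_combination 2 * hsum + hrange

end Set

namespace IsNumericalSemigroup

variable {S : Set ℕ} (hS : IsNumericalSemigroup S)

include hS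

theorem zero_mem : 0 ∈ S := hS.1

theorem add_mem {a b : ℕ} (ha : a ∈ S) (hb : b ∈ S) : a + b ∈ S := hS.2.1 a ha b hb

theorem add_mul_mem {a m : ℕ} (ha : a ∈ S) (hm : m ∈ S) (k : ℕ) : a + m * k ∈ S := by
  induction k with
  | zero => exact ha
  | succ k ih =>
    rw [Nat.mul_succ, ← add_assoc]
    exact hS.add_mem ih hm

theorem mem_of_forall_lt_add_mem {a m : ℕ} (hm : m ∈ S) (hm0 : 0 < m)
    (h : ∀ i < m, a + i ∈ S) {n : ℕ} (hn : a ≤ n) : n ∈ S := by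
  have := hS.add_mul_mem (h ((n - a) % m) (Nat.mod_lt _ hm0)) hm ((n - a) / m)
  rwa [add_assoc, Nat.mod_add_div, Nat.add_sub_cancel' hn] at this

theorem mem_of_sgConductor_le {n : ℕ} (hn : sgConductor S ≤ n) : n ∈ S := by
  obtain ⟨b, hb⟩ := hS.2.2.bddAbove
  have hne : {c : ℕ | ∀ n : ℕ, c ≤ n → n ∈ S}.Nonempty := by
    refine ⟨b + 1, fun n hn => ?_⟩
    by_contra h
    exact absurd (hb h) (by omega)
  exact Nat.sInf_mem hne n hn

theorem mem_sgGaps {x : ℕ} : x ∈ sgGaps S ↔ x ∉ S := by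
  rw [sgGaps, mem_sgGapsBelow, and_iff_right_iff_imp]
  exact fun hx => lt_of_not_ge fun h => hx (hS.mem_of_sgConductor_le h)

theorem card_sgGaps : #(sgGaps S) = sgGenus S := by
  rw [sgGenus, ← Set.ncard_coe_finset]
  congr 1
  ext x
  exact hS.mem_sgGaps

theorem sgFrobenius_add_one {x : ℕ} (hx : x ∉ S) : sgFrobenius S + 1 = sgConductor S :=
  Nat.sub_add_cancel <| Nat.one_le_iff_ne_zero.mpr fun h =>
    hx (hS.mem_of_sgConductor_le (h ▸ Nat.zero_le x))

theorem le_sgFrobenius {x : ℕ} (hx : x ∉ S) : x ≤ sgFrobenius S := by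
  by_contra! h
  exact hx (hS.mem_of_sgConductor_le (by rw [← hS.sgFrobenius_add_one hx]; omega))

theorem sgFrobenius_notMem {x : ℕ} (hx : x ∉ S) : sgFrobenius S ∉ S := by
  intro hF
  have hle : sgConductor S ≤ sgFrobenius S := Nat.sInf_le fun n hn => by
    rcases hn.eq_or_lt with rfl | hn
    · exact hF
    · exact hS.mem_of_sgConductor_le (by rw [← hS.sgFrobenius_add_one hx]; omega)
  rw [← hS.sgFrobenius_add_one hx] at hle
  omega

theorem sum_sgGaps {M : Type*} [AddCommMonoid M] (f : ℕ → M) {x : ℕ} (hx : x ∉ S) :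
    ∑ y ∈ sgGaps S, f y = ∑ y ∈ sgGapsBelow S (sgFrobenius S), f y + f (sgFrobenius S) := by
  rw [sgGaps, ← hS.sgFrobenius_add_one hx, sum_sgGapsBelow_succ _ (hS.sgFrobenius_notMem hx)]

theorem card_sgGaps_eq_add_one {x : ℕ} (hx : x ∉ S) :
    #(sgGaps S) = #(sgGapsBelow S (sgFrobenius S)) + 1 := by
  rw [sgGaps, ← hS.sgFrobenius_add_one hx, card_sgGapsBelow_succ (hS.sgFrobenius_notMem hx)]

theorem card_sgGaps_le_sgFrobenius : #(sgGaps S) ≤ sgFrobenius S := by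
  have hsub : sgGaps S ⊆ Icc 1 (sgFrobenius S) := fun x hx => by
    rw [hS.mem_sgGaps] at hx
    exact mem_Icc.mpr
      ⟨Nat.one_le_iff_ne_zero.mpr fun h => hx (h ▸ hS.zero_mem), hS.le_sgFrobenius hx⟩
  simpa using card_le_card hsub

theorem sgMultiplicity_spec : 0 < sgMultiplicity S ∧ sgMultiplicity S ∈ S :=
  Nat.sInf_mem (s := {x | 0 < x ∧ x ∈ S})
    ⟨sgConductor S + 1, Nat.succ_pos _, hS.mem_of_sgConductor_le (Nat.le_succ _)⟩

theorem four_le_sgMultiplicity (h2 : 2 ∉ S) (h3 : 3 ∉ S) : 4 ≤ sgMultiplicity S := by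
  obtain ⟨hpos, hmem⟩ := hS.sgMultiplicity_spec
  by_contra! h
  interval_cases sgMultiplicity S
  exacts [h2 (hS.add_mem hmem hmem), h2 hmem, h3 hmem]

theorem isPseudoSymmetricUpTo_of_two_mul_card_le {l : ℕ} (hl : l ∉ S)
    (hcard : 2 * #(sgGapsBelow S l) ≤ l) : IsPseudoSymmetricUpTo S l := by
  classical
  -- Reflection maps the elements of `S` in `[0, l]` injectively to gaps, because `l` is a gap, so
  -- it leaves at most one gap over.
  have hgaps : {x ∈ sgGapsBelow S (l + 1) | l - x ∈ S} = {x ∈ range (l + 1) | l - x ∈ S} := by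
    ext x
    simp only [mem_filter, mem_sgGapsBelow, mem_range, and_congr_left_iff, and_iff_left_iff_imp]
    intro hlx hx hxS
    refine hl ?_
    rw [← Nat.add_sub_cancel' (Nat.le_of_lt_succ hx)]
    exact hS.add_mem hxS hlx
  have hreflect : #{x ∈ range (l + 1) | l - x ∈ S} = #{x ∈ range (l + 1) | x ∈ S} := by
    simpa only [card_eq_sum_ones, Nat.add_sub_cancel] using
      sum_filter_range_reflect (· ∈ S) (fun _ => 1) (l + 1)
  have hrange : #{x ∈ range (l + 1) | x ∈ S} + #(sgGapsBelow S (l + 1)) = l + 1 := by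
    rw [sgGapsBelow, card_filter_add_card_filter_not, card_range]
  have hsplit := card_filter_add_card_filter_not (s := sgGapsBelow S (l + 1)) (l - · ∈ S)
  have hbad : #{x ∈ sgGapsBelow S (l + 1) | l - x ∉ S} ≤ 1 := by
    rw [hgaps, hreflect] at hsplit
    rw [card_sgGapsBelow_succ hl] at hsplit hrange
    omega
  intro x hxl hx
  by_contra! h
  have hmid := card_le_one.mp hbad x (by simp [mem_sgGapsBelow, *]) (l - x)
    (by simp [mem_sgGapsBelow, Nat.sub_sub_self, *])
  omega

theorem sub_mem_or_of_isPseudoSymmetricUpTo {l d a : ℕ} (hsymm : IsPseudoSymmetricUpTo S l)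
    (hld : l + d ∉ S) (ha : a ∈ S) (hda : d ≤ a) (hal : a ≤ l) :
    a - d ∈ S ∨ 2 * (a - d) = l := by
  have hx : l - (a - d) ∉ S := fun h => hld <| by
    rw [show l + d = l - (a - d) + a by omega]
    exact hS.add_mem h ha
  have := hsymm _ (by omega) hx
  rw [show l - (l - (a - d)) = a - d by omega] at this
  exact this.imp_right (by omega)

theorem dvd_or_dvd_of_add_sgMultiplicity_notMem {l a : ℕ} (hsymm : IsPseudoSymmetricUpTo S l)
    (hlm : l + sgMultiplicity S ∉ S) (ha : a ∈ S) (hal : a ≤ l) :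
    (sgMultiplicity S : ℤ) ∣ a ∨ (2 * sgMultiplicity S : ℤ) ∣ 2 * a - l := by
  induction a using Nat.strong_induction_on with
  | _ a ih =>
    rcases Nat.eq_zero_or_pos a with rfl | hpos
    · exact Or.inl (dvd_zero _)
    have hma := sgMultiplicity_le hpos ha
    have hm0 := hS.sgMultiplicity_spec.1
    have hcast : ((a - sgMultiplicity S : ℕ) : ℤ) = a - sgMultiplicity S := Nat.cast_sub hma
    rcases hS.sub_mem_or_of_isPseudoSymmetricUpTo hsymm hlm ha hma hal with h | h
    · refine (ih _ (by omega) h (by omega)).imp ?_ ?_ <;> rw [hcast] <;> intro hdvd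
      · exact (dvd_sub_self_right).mp hdvd
      · have := dvd_add hdvd (dvd_refl (2 * sgMultiplicity S : ℤ))
        rwa [show (2 * (a - sgMultiplicity S) - l + 2 * sgMultiplicity S : ℤ) = 2 * a - l by ring]
          at this
    · exact Or.inr ⟨1, by omega⟩

theorem dvd_iff_not_dvd_of_add_sgMultiplicity_notMem {l a b : ℕ}
    (hsymm : IsPseudoSymmetricUpTo S l) (hlm : l + sgMultiplicity S ∉ S) (ha : a ∈ S) (hb : b ∈ S)
    (hab : a < b) (hba : b < a + sgMultiplicity S) (hbl : b ≤ l) :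
    (sgMultiplicity S : ℤ) ∣ a ↔ ¬ (sgMultiplicity S : ℤ) ∣ b := by
  have hndvd : ¬ (sgMultiplicity S : ℤ) ∣ b - a :=
    fun h => absurd (Int.le_of_dvd (by omega) h) (by omega)
  refine ⟨fun hda hdb => hndvd (dvd_sub hdb hda), fun hdb => ?_⟩
  refine (hS.dvd_or_dvd_of_add_sgMultiplicity_notMem hsymm hlm ha (hab.le.trans hbl)).resolve_right
    fun hla => hndvd ?_
  have hlb := (hS.dvd_or_dvd_of_add_sgMultiplicity_notMem hsymm hlm hb hbl).resolve_left hdb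
  have := dvd_sub hlb hla
  rw [show (2 * b - l - (2 * a - l) : ℤ) = 2 * (b - a) by ring] at this
  exact (mul_dvd_mul_iff_left two_ne_zero).mp this

theorem add_sgMultiplicity_mem_of_isPseudoSymmetricUpTo {l : ℕ} (hm : 4 ≤ sgMultiplicity S)
    (hl : 3 ≤ l) (hsymm : IsPseudoSymmetricUpTo S l) : l + sgMultiplicity S ∈ S := by
  by_contra hlm
  have hgap {x : ℕ} (h0 : 0 < x) (hx : x < 4) : x ∉ S := notMem_of_lt_sgMultiplicity h0 (by omega)
  have hl1 : l - 1 ∈ S := (hsymm 1 (by omega) (hgap (by omega) (by omega))).resolve_right (by omega)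
  have hml1 : sgMultiplicity S ≤ l - 1 := sgMultiplicity_le (by omega) hl1
  have hl2 : l - 2 ∈ S := (hsymm 2 (by omega) (hgap (by omega) (by omega))).resolve_right (by omega)
  have hl3 : l - 3 ∈ S := by
    refine (hsymm 3 (by omega) (hgap (by omega) (by omega))).resolve_right fun h => ?_
    have hml2 := sgMultiplicity_le (by omega) hl2
    have := hS.sub_mem_or_of_isPseudoSymmetricUpTo hsymm hlm hl1 hml1 (by omega)
    rw [show l - 1 - sgMultiplicity S = 1 by omega] at this
    exact this.elim (hgap (by omega) (by omega)) (by omega)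
  -- `l - 1`, `l - 2` and `l - 3` would be pairwise of different divisibility by the multiplicity.
  have h12 := hS.dvd_iff_not_dvd_of_add_sgMultiplicity_notMem hsymm hlm hl2 hl1 (by omega)
    (by omega) (by omega)
  have h13 := hS.dvd_iff_not_dvd_of_add_sgMultiplicity_notMem hsymm hlm hl3 hl1 (by omega)
    (by omega) (by omega)
  have h23 := hS.dvd_iff_not_dvd_of_add_sgMultiplicity_notMem hsymm hlm hl3 hl2 (by omega)
    (by omega) (by omega)
  tauto

theorem eq_two_mul_sgMultiplicity_sub_two {l l' : ℕ} (hm : 4 ≤ sgMultiplicity S) (hl3 : 3 ≤ l)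
    (hll' : l < l') (hl' : l' ∉ S) (hsymm : IsPseudoSymmetricUpTo S l) :
    l = 2 * sgMultiplicity S - 2 := by
  obtain ⟨hm0, hmS⟩ := hS.sgMultiplicity_spec
  have hlm := hS.add_sgMultiplicity_mem_of_isPseudoSymmetricUpTo hm hl3 hsymm
  obtain ⟨d, hd0, hdm, hld⟩ : ∃ d, 0 < d ∧ d < sgMultiplicity S ∧ l + d ∉ S := by
    by_contra! h
    refine hl' (hS.mem_of_forall_lt_add_mem (a := l + 1) hmS hm0 (fun i hi => ?_) hll')
    rw [add_assoc, add_comm 1 i]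
    rcases (Nat.succ_le_of_lt hi).lt_or_eq with hi | hi
    · exact h _ (Nat.succ_pos i) hi
    · rwa [← hi] at hlm
  have hml : sgMultiplicity S ≤ l - 1 := by
    refine sgMultiplicity_le (by omega) ((hsymm 1 (by omega) ?_).resolve_right (by omega))
    exact notMem_of_lt_sgMultiplicity one_pos (by omega)
  have hl_eq : 2 * (sgMultiplicity S - d) = l :=
    (hS.sub_mem_or_of_isPseudoSymmetricUpTo hsymm hld hmS hdm.le (by omega)).resolve_left
      (notMem_of_lt_sgMultiplicity (by omega) (by omega))
  have hmid : 2 * (sgMultiplicity S - 1) = l :=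
    (hsymm _ (by omega) (notMem_of_lt_sgMultiplicity (by omega) (by omega))).resolve_left
      (notMem_of_lt_sgMultiplicity (by omega) (by omega))
  omega

theorem card_sgGaps_le_six (h4 : 4 ∈ S) (h5 : 5 ∈ S) : #(sgGaps S) ≤ 6 := by
  have h8 := hS.add_mem h4 h4
  have h9 := hS.add_mem h4 h5
  have h10 := hS.add_mem h5 h5
  have hlarge {n : ℕ} (hn : 12 ≤ n) : n ∈ S :=
    hS.mem_of_forall_lt_add_mem (a := 12) h4 four_pos (fun i hi => by
      interval_cases i
      exacts [(hS.add_mem h8 h4 :), (hS.add_mem h9 h4 :), (hS.add_mem h10 h4 :),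
        (hS.add_mem h10 h5 :)]) hn
  refine card_le_card (t := {1, 2, 3, 6, 7, 11}) fun x hx => ?_
  rw [hS.mem_sgGaps] at hx
  have hx12 : x < 12 := lt_of_not_ge fun h => hx (hlarge h)
  interval_cases x
  all_goals first | decide | exact absurd (by first | exact hS.zero_mem | assumption) hx

theorem mem_of_two_mul_sgMultiplicity_le {n : ℕ} (hm : 5 ≤ sgMultiplicity S)
    (hsymm : IsPseudoSymmetricUpTo S (2 * sgMultiplicity S - 2))
    (hn : 2 * sgMultiplicity S ≤ n) : n ∈ S := by
  obtain ⟨hm0, hmS⟩ := hS.sgMultiplicity_spec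
  refine hS.mem_of_forall_lt_add_mem hmS hm0 (fun i hi => ?_) hn
  rcases lt_or_ge i (sgMultiplicity S - 2) with h | h
  · rw [two_mul, add_assoc]
    exact hS.add_mem hmS (hsymm.mem_of_sgMultiplicity_le (by omega) (by omega))
  · rw [show 2 * sgMultiplicity S + i = (2 * sgMultiplicity S - 3) + (i + 3) by omega]
    exact hS.add_mem (hsymm.mem_of_sgMultiplicity_le (by omega) (by omega))
      (hsymm.mem_of_sgMultiplicity_le (by omega) (by omega))

theorem sgGapsBelow_subset_of_isPseudoSymmetricUpTo {n : ℕ} (hn : n < 2 * sgMultiplicity S)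
    (hsymm : IsPseudoSymmetricUpTo S (2 * sgMultiplicity S - 2)) :
    sgGapsBelow S n ⊆ insert (2 * sgMultiplicity S - 2) (Ico 1 (sgMultiplicity S)) := by
  intro x hx
  obtain ⟨hxn, hxS⟩ := mem_sgGapsBelow.mp hx
  have h0 : x ≠ 0 := fun h => hxS (h ▸ hS.zero_mem)
  have hblock : ¬ (sgMultiplicity S ≤ x ∧ x < 2 * sgMultiplicity S - 2) :=
    fun h => hxS (hsymm.mem_of_sgMultiplicity_le h.1 h.2)
  rw [mem_insert, mem_Ico]
  omega

theorem sum_lt_of_isPseudoSymmetricUpTo (hg : 11 ≤ #(sgGaps S)) (hm : 4 ≤ sgMultiplicity S)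
    (hF : sgMultiplicity S ≤ sgFrobenius S)
    (hsymm : IsPseudoSymmetricUpTo S (2 * sgMultiplicity S - 2)) :
    ∑ x ∈ sgGapsBelow S (sgFrobenius S), x < (#(sgGaps S) - 2) ^ 2 + 2 := by
  obtain ⟨z, hz⟩ : (sgGaps S).Nonempty := card_pos.mp (by omega)
  rw [hS.mem_sgGaps] at hz
  have hm5 : 5 ≤ sgMultiplicity S := by
    by_contra! h
    have := hS.card_sgGaps_le_six (hsymm.mem_of_sgMultiplicity_le (by omega) (by omega))
      (hsymm.mem_of_sgMultiplicity_le (by omega) (by omega))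
    omega
  have hF' : sgFrobenius S < 2 * sgMultiplicity S := lt_of_not_ge fun h =>
    hS.sgFrobenius_notMem hz (hS.mem_of_two_mul_sgMultiplicity_le hm5 hsymm h)
  have hsub := hS.sgGapsBelow_subset_of_isPseudoSymmetricUpTo hF' hsymm
  have hsup : Ico 1 (sgMultiplicity S) ⊆ sgGapsBelow S (sgFrobenius S) := fun x hx => by
    rw [mem_Ico] at hx
    exact mem_sgGapsBelow.mpr ⟨by omega, notMem_of_lt_sgMultiplicity hx.1 hx.2⟩
  have hnot : 2 * sgMultiplicity S - 2 ∉ Ico 1 (sgMultiplicity S) := by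
    rw [mem_Ico]
    omega
  have hle := card_le_card hsub
  have hge := card_le_card hsup
  have hsum := sum_le_sum_of_subset (f := fun x => x) hsub
  rw [card_insert_of_notMem hnot, Nat.card_Ico] at hle
  rw [Nat.card_Ico] at hge
  rw [sum_insert hnot] at hsum
  rw [hS.card_sgGaps_eq_add_one hz] at hg ⊢
  obtain ⟨k, hk⟩ := Nat.exists_eq_add_of_le' (show 10 ≤ sgMultiplicity S by omega)
  have hgauss : 2 * ∑ x ∈ Ico 1 (k + 10), x = (k + 10) * (k + 9) := by
    have := sum_range_id_mul_two (k + 10)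
    rwa [range_eq_Ico, sum_eq_sum_Ico_succ_bot (by omega), zero_add, mul_comm] at this
  rw [hk] at hsum hge
  rw [show 2 * (k + 10) - 2 = 2 * k + 18 by omega] at hsum
  have hpow : (k + 8) ^ 2 ≤ (#(sgGapsBelow S (sgFrobenius S)) + 1 - 2) ^ 2 :=
    Nat.pow_le_pow_left (by omega) 2
  nlinarith

theorem le_biellipticGap {x : ℕ} (hg : 11 ≤ #(sgGaps S)) (hm : 4 ≤ sgMultiplicity S)
    (hsum : (#(sgGaps S) - 2) ^ 2 + 2 ≤ ∑ x ∈ sgGapsBelow S (sgFrobenius S), x)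
    (hxF : x < sgFrobenius S) (hx : x ∉ S) : x ≤ biellipticGap #(sgGapsBelow S x) := by
  rcases lt_or_ge x 3 with hx3 | hx3
  · have hsub : Ico 1 x ⊆ sgGapsBelow S x := fun y hy => by
      rw [mem_Ico] at hy
      exact mem_sgGapsBelow.mpr ⟨hy.2, notMem_of_lt_sgMultiplicity hy.1 (by omega)⟩
    have hcard := card_le_card hsub
    have hgap := succ_le_biellipticGap #(sgGapsBelow S x)
    rw [Nat.card_Ico] at hcard
    omega
  · by_contra! hlt
    have hcard : 2 * #(sgGapsBelow S x) ≤ x := by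
      unfold biellipticGap at hlt
      split_ifs at hlt <;> omega
    have hsymm := hS.isPseudoSymmetricUpTo_of_two_mul_card_le hx hcard
    obtain rfl := hS.eq_two_mul_sgMultiplicity_sub_two hm hx3 hxF (hS.sgFrobenius_notMem hx) hsymm
    exact (hS.sum_lt_of_isPseudoSymmetricUpTo hg hm (by omega) hsymm).not_ge hsum

theorem eq_biellipticGap {x : ℕ} (hg : 11 ≤ #(sgGaps S)) (hm : 4 ≤ sgMultiplicity S)
    (hsum : (#(sgGaps S) - 2) ^ 2 + 2 ≤ ∑ x ∈ sgGapsBelow S (sgFrobenius S), x)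
    (hxF : x < sgFrobenius S) (hx : x ∉ S) : x = biellipticGap #(sgGapsBelow S x) := by
  have hle : ∀ y ∈ sgGapsBelow S (sgFrobenius S), y ≤ biellipticGap #(sgGapsBelow S y) :=
    fun y hy => hS.le_biellipticGap hg hm hsum (mem_sgGapsBelow.mp hy).1 (mem_sgGapsBelow.mp hy).2
  have htotal : ∑ y ∈ sgGapsBelow S (sgFrobenius S), biellipticGap #(sgGapsBelow S y) =
      (#(sgGaps S) - 2) ^ 2 + 2 := by
    obtain ⟨k, hk⟩ := Nat.exists_eq_add_of_le' (show 3 ≤ #(sgGaps S) by omega)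
    have hcard := hS.card_sgGaps_eq_add_one hx
    rw [sum_sgGapsBelow_card, show #(sgGapsBelow S (sgFrobenius S)) = k + 2 by omega, hk,
      sum_range_biellipticGap, show k + 3 - 2 = k + 1 by omega]
  exact (sum_eq_sum_iff_of_le hle).mp ((sum_le_sum hle).antisymm (htotal.le.trans hsum)) x
    (mem_sgGapsBelow.mpr ⟨hxF, hx⟩)

theorem exists_mul_add_notMem_iff_lt {m : ℕ} (hm : m ∈ S) (hm0 : 0 < m) (r : ℕ) :
    ∃ k, ∀ i, m * i + r ∉ S ↔ i < k := by
  have hupper : IsUpperSet {i | m * i + r ∈ S} := fun i j hij hi => by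
    have := hS.add_mul_mem hi hm (j - i)
    rwa [add_right_comm, ← mul_add, Nat.add_sub_cancel' hij] at this
  have hne : {i | m * i + r ∈ S} ≠ ∅ := Set.nonempty_iff_ne_empty.mp
    ⟨sgConductor S, hS.mem_of_sgConductor_le (by nlinarith)⟩
  obtain ⟨k, hk⟩ := hupper.eq_empty_or_Ici.resolve_left hne
  refine ⟨k, fun i => ?_⟩
  rw [← not_le, ← Set.mem_Ici, ← hk]
  rfl

theorem exists_sgGaps_eq_of_three_mem (h3 : 3 ∈ S) : ∃ x y, x ≤ 2 * y + 1 ∧ y ≤ 2 * x ∧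
    sgGaps S = gapsModThree x y := by
  obtain ⟨x, hx⟩ := hS.exists_mul_add_notMem_iff_lt h3 three_pos 1
  obtain ⟨y, hy⟩ := hS.exists_mul_add_notMem_iff_lt h3 three_pos 2
  refine ⟨x, y, ?_, ?_, ?_⟩
  · have hyS : 3 * y + 2 ∈ S := by simpa using (hy y).not
    refine le_of_not_gt fun h => (hx _).mpr h ?_
    rw [show 3 * (2 * y + 1) + 1 = (3 * y + 2) + (3 * y + 2) by ring]
    exact hS.add_mem hyS hyS
  · have hxS : 3 * x + 1 ∈ S := by simpa using (hx x).not
    refine le_of_not_gt fun h => (hy _).mpr h ?_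
    rw [show 3 * (2 * x) + 2 = (3 * x + 1) + (3 * x + 1) by ring]
    exact hS.add_mem hxS hxS
  · ext n
    rw [hS.mem_sgGaps, mem_gapsModThree]
    constructor
    · intro hn
      have h0 : n % 3 ≠ 0 := fun h0 => hn <| by
        have := hS.add_mul_mem hS.zero_mem h3 (n / 3)
        rwa [show 0 + 3 * (n / 3) = n by omega] at this
      rcases (show n % 3 = 1 ∨ n % 3 = 2 by omega) with h | h
      · have hdiv : 3 * (n / 3) + 1 = n := by omega
        exact Or.inl ⟨n / 3, (hx _).mp (by rwa [hdiv]), hdiv⟩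
      · have hdiv : 3 * (n / 3) + 2 = n := by omega
        exact Or.inr ⟨n / 3, (hy _).mp (by rwa [hdiv]), hdiv⟩
    · rintro (⟨i, hi, rfl⟩ | ⟨i, hi, rfl⟩)
      exacts [(hx i).mpr hi, (hy i).mpr hi]

theorem sum_lt_of_three_mem (hg : 11 ≤ #(sgGaps S)) (h3 : 3 ∈ S) :
    ∑ x ∈ sgGapsBelow S (sgFrobenius S), x < (#(sgGaps S) - 2) ^ 2 + 2 := by
  obtain ⟨x, y, hxy, hyx, hgaps⟩ := hS.exists_sgGaps_eq_of_three_mem h3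
  have hcard : #(sgGaps S) = x + y := by
    rw [hgaps, card_gapsModThree]
  have hsum : 2 * ∑ n ∈ sgGaps S, (n : ℤ) =
      3 * (x * (x - 1)) + 2 * x + (3 * (y * (y - 1)) + 4 * y) := by
    rw [hgaps, two_mul_sum_gapsModThree]
  have hmem {n : ℕ} : n ∉ S ↔ (∃ i < x, 3 * i + 1 = n) ∨ ∃ i < y, 3 * i + 2 = n := by
    rw [← hS.mem_sgGaps, hgaps, mem_gapsModThree]
  have hFx : 3 * (x - 1) + 1 ≤ sgFrobenius S :=
    hS.le_sgFrobenius (hmem.mpr (.inl ⟨x - 1, by omega, rfl⟩))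
  have hFy : 3 * (y - 1) + 2 ≤ sgFrobenius S :=
    hS.le_sgFrobenius (hmem.mpr (.inr ⟨y - 1, by omega, rfl⟩))
  have h1 : 1 ∉ S := hmem.mpr (.inl ⟨0, by omega, rfl⟩)
  rw [hS.sum_sgGaps _ h1] at hsum
  obtain ⟨k, hk⟩ := Nat.exists_eq_add_of_le' (show 2 ≤ #(sgGaps S) by omega)
  have hk' : (k : ℤ) = x + y - 2 := by omega
  rw [hk, Nat.add_sub_cancel]
  zify
  rw [hk']
  rcases le_or_gt x y with h | h
  · have hF : (3 : ℤ) * y - 1 ≤ sgFrobenius S := by omega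
    have hp : (0 : ℤ) ≤ (y - x) * (2 * x - y) := mul_nonneg (by omega) (by omega)
    have hq : (0 : ℤ) ≤ (x - 4) * (x + y - 4) := mul_nonneg (by omega) (by omega)
    nlinarith
  · have hF : (3 : ℤ) * x - 2 ≤ sgFrobenius S := by omega
    have hp : (0 : ℤ) ≤ (x - y) * (2 * y + 1 - x) := mul_nonneg (by omega) (by omega)
    have hq : (0 : ℤ) ≤ (y - 4) * (x + y - 6) := mul_nonneg (by omega) (by omega)
    nlinarith

theorem isBielliptic_of_le_sum (hg : 11 ≤ #(sgGaps S)) (h2 : 2 ∉ S)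
    (hsum : (#(sgGaps S) - 2) ^ 2 + 2 ≤ ∑ x ∈ sgGapsBelow S (sgFrobenius S), x) :
    IsBielliptic S := by
  have h1 : 1 ∉ S := fun h => h2 (hS.add_mem h h)
  have h3 : 3 ∉ S := fun h => (hS.sum_lt_of_three_mem hg h).not_ge hsum
  have hF := hS.card_sgGaps_le_sgFrobenius
  have hmem {x : ℕ} (hx : x < 11) (hne : ∀ j, x ≠ biellipticGap j) : x ∈ S := by
    by_contra hxS
    exact hne _ (hS.eq_biellipticGap hg (hS.four_le_sgMultiplicity h2 h3) hsum (by omega) hxS)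
  have h4 : 4 ∈ S := hmem (by omega) fun j => by unfold biellipticGap; split_ifs <;> omega
  have h6 : 6 ∈ S := hmem (by omega) fun j => by unfold biellipticGap; split_ifs <;> omega
  refine ⟨h4, h6, h1, h2, h3, fun h5 => ?_⟩
  have := hS.card_sgGaps_le_six h4 h5
  omega

theorem even_mem_of_four_mem_of_six_mem (h4 : 4 ∈ S) (h6 : 6 ∈ S) {n : ℕ} (hn : Even n)
    (hn2 : n ≠ 2) : n ∈ S := by
  obtain ⟨j, rfl | rfl⟩ : ∃ j, n = 4 * j ∨ n = 4 * j + 2 := ⟨n / 4, by grind⟩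
  · simpa using hS.add_mul_mem hS.zero_mem h4 j
  · have := hS.add_mul_mem h6 h4 (j - 1)
    rwa [show 6 + 4 * (j - 1) = 4 * j + 2 by omega] at this

theorem exists_sgGapsBelow_eq_of_four_mem_of_six_mem (hF : 2 < sgFrobenius S) (h2 : 2 ∉ S)
    (h4 : 4 ∈ S) (h6 : 6 ∈ S) :
    ∃ n, sgGapsBelow S (sgFrobenius S) = insert 2 ((range n).image (2 * · + 1)) := by
  have heven {n : ℕ} (hn : Even n) (hn2 : n ≠ 2) : n ∈ S :=
    hS.even_mem_of_four_mem_of_six_mem h4 h6 hn hn2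
  have hFS := hS.sgFrobenius_notMem h2
  have hFodd : Odd (sgFrobenius S) := Nat.not_even_iff_odd.mp fun h => hFS (heven h hF.ne')
  have hlower : IsLowerSet {i | 2 * i + 1 ∈ sgGapsBelow S (sgFrobenius S)} := by
    rintro j i hij hj
    obtain ⟨hjF, hjS⟩ := mem_sgGapsBelow.mp hj
    rcases hij.eq_or_lt with rfl | hij
    · exact hj
    refine mem_sgGapsBelow.mpr ⟨by omega, fun hi => hFS ?_⟩
    rw [← Nat.add_sub_cancel' (show 2 * i + 1 ≤ sgFrobenius S by omega)]
    exact hS.add_mem hi (heven (Nat.Odd.sub_odd hFodd (odd_two_mul_add_one i)) (by omega))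
  have hne : {i | 2 * i + 1 ∈ sgGapsBelow S (sgFrobenius S)} ≠ Set.univ := fun h => by
    have := (mem_sgGapsBelow.mp (h ▸ Set.mem_univ (sgFrobenius S) :
      sgFrobenius S ∈ {i | 2 * i + 1 ∈ sgGapsBelow S (sgFrobenius S)})).1
    omega
  obtain ⟨n, hn⟩ := hlower.eq_univ_or_Iio.resolve_left hne
  have hodd (i : ℕ) : 2 * i + 1 ∈ sgGapsBelow S (sgFrobenius S) ↔ i < n := Set.ext_iff.mp hn i
  refine ⟨n, ext fun x => ?_⟩
  rw [mem_insert, mem_image]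
  constructor
  · intro hx
    rcases Nat.even_or_odd' x with ⟨i, rfl | rfl⟩
    · exact Or.inl (by_contra fun h => (mem_sgGapsBelow.mp hx).2 (heven (even_two_mul i) h))
    · exact Or.inr ⟨i, mem_range.mpr ((hodd i).mp hx), rfl⟩
  · rintro (rfl | ⟨i, hi, rfl⟩)
    exacts [mem_sgGapsBelow.mpr ⟨hF, h2⟩, (hodd i).mpr (mem_range.mp hi)]

theorem sum_eq_of_four_mem_of_six_mem (hF : 2 < sgFrobenius S) (h2 : 2 ∉ S) (h4 : 4 ∈ S)
    (h6 : 6 ∈ S) : ∑ x ∈ sgGapsBelow S (sgFrobenius S), x = (#(sgGaps S) - 2) ^ 2 + 2 := by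
  obtain ⟨n, hn⟩ := hS.exists_sgGapsBelow_eq_of_four_mem_of_six_mem hF h2 h4 h6
  have hnot : 2 ∉ (range n).image (2 * · + 1) := by
    simp only [mem_image, not_exists, not_and]
    omega
  have hinj : Function.Injective (2 * · + 1) := fun i j h => by
    simpa using h
  rw [hS.card_sgGaps_eq_add_one h2, hn, sum_insert hnot, card_insert_of_notMem hnot,
    sum_image hinj.injOn, card_image_of_injective _ hinj, card_range,
    sum_range_two_mul_add_one, add_comm]
  simp

theorem sgWeight_Kset_eq_iff {x : ℕ} (hx : x ∉ S) (hg : 2 ≤ sgGenus S) :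
    sgWeight (Kset S) = ((sgGenus S : ℤ) ^ 2 - 5 * sgGenus S + 10) / 2 ↔
      ∑ y ∈ sgGapsBelow S (sgFrobenius S), y = (sgGenus S - 2) ^ 2 + 2 := by
  have hW := two_mul_sgWeight_Kset S
  rw [hS.sum_sgGaps _ hx, hS.card_sgGaps, ← hS.sgFrobenius_add_one hx] at hW
  obtain ⟨k, hk⟩ := Nat.exists_eq_add_of_le' hg
  obtain ⟨t, ht⟩ := (Int.even_mul_succ_self (k : ℤ)).two_dvd
  rw [hk] at hW ⊢
  have heven : ((k + 2 : ℕ) : ℤ) ^ 2 - 5 * (k + 2 : ℕ) + 10 = 2 * (t - k + 2) := by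
    push_cast
    linear_combination ht
  rw [heven, Int.mul_ediv_cancel_left _ two_ne_zero, Nat.add_sub_cancel]
  zify at hW ⊢
  constructor <;> intro h <;> linarith

end IsNumericalSemigroup

end Gaps

/-- for a numerical semigroup of genus `g ≥ 11` with `2 ∉ S`,
`W_K = (g²−5g+10)/2` iff `S` is bielliptic, i.e. iff `4 ∈ S`, `6 ∈ S` and
`1, 2, 3, 5 ∉ S`. -/
theorem weight_Kset_submaximal_iff_bielliptic (S : Set ℕ) (hS : IsNumericalSemigroup S)
    (g : ℕ) (hg : sgGenus S = g) (hgge : 11 ≤ g) (h2 : 2 ∉ S) :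
    sgWeight (Kset S) = ((g : ℤ) ^ 2 - 5 * (g : ℤ) + 10) / 2 ↔
      (4 ∈ S ∧ 6 ∈ S ∧ 1 ∉ S ∧ 2 ∉ S ∧ 3 ∉ S ∧ 5 ∉ S) := by
  subst hg
  rw [hS.sgWeight_Kset_eq_iff h2 (by omega), ← hS.card_sgGaps]
  rw [← hS.card_sgGaps] at hgge
  exact ⟨fun hsum => hS.isBielliptic_of_le_sum hgge h2 hsum.ge, fun ⟨h4, h6, _⟩ =>
    hS.sum_eq_of_four_mem_of_six_mem (by have := hS.card_sgGaps_le_sgFrobenius; omega) h2 h4 h6⟩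
end
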